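/- (Theorem 14, Holmstedt-type formula) Let 0 < θ₁ < 1, 0 < q₁, r₁ ≤ ∞, a₁, b₁ ∈ SV, and ‖s^{-1/r₁} b₁(s)/a₁(s)‖_{r₁,(1,∞)} < ∞. Put c₁(t) = a₁(t) ‖s^{-1/r₁} b₁(s)/a₁(s)‖_{r₁,(t,∞)} and ρ(t) = t^{θ₁}/c₁(t). Then, with constants independent of f and t, for all f ∈ A₀ + Ā^𝓛_{θ₁,r₁,b₁,q₁,a₁} and all t > 0: K(ρ(t), f; A₀, Ā^𝓛_{θ₁,r₁,b₁,q₁,a₁}) ≈ K(t, f) + ρ(t) ‖ s^{-1/r₁} (b₁(s)/a₁(s)) ‖u^{-θ₁-1/q₁} a₁(u) K(u, f)‖_{q₁,(t,s)} ‖_{r₁,(t,∞)}. -/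

import Mathlib

open MeasureTheory Set ENNReal Filter

noncomputable section

/-- The `L_q` quasi-norm (with respect to Lebesgue measure) of an `ℝ≥0∞`-valued
function over a set of reals; for `q = ∞` it is the essential supremum. -/
def LqNorm (q : ℝ≥0∞) (s : Set ℝ) (g : ℝ → ℝ≥0∞) : ℝ≥0∞ :=
  if q = ∞ then essSup g (volume.restrict s)
  else (∫⁻ t in s, g t ^ q.toReal) ^ q⁻¹.toReal

/-- The weight `s ↦ s ^ (-1/r) * b s`, as an `ℝ≥0∞`-valued function
(`1/∞ = 0` by convention). -/
def svWgt (r : ℝ≥0∞) (b : ℝ → ℝ) : ℝ → ℝ≥0∞ :=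
  fun s => ENNReal.ofReal (s ^ (-(r⁻¹.toReal)) * b s)

/-- `f` and `g` are equivalent on `s`: each is bounded by a constant multiple
of the other there. -/
def EquivOn (s : Set ℝ) (f g : ℝ → ℝ) : Prop :=
  ∃ C : ℝ, 0 < C ∧ ∀ t ∈ s, C⁻¹ * g t ≤ f t ∧ f t ≤ C * g t

/-- A positive measurable function `b` on `(0,∞)` is slowly varying if for every
`ε > 0`, `t ^ ε * b t` is equivalent to a non-decreasing function and
`t ^ (-ε) * b t` is equivalent to a non-increasing function. -/
def SlowlyVarying (b : ℝ → ℝ) : Prop :=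
  AEMeasurable b (volume.restrict (Ioi 0)) ∧ (∀ t ∈ Ioi (0:ℝ), 0 < b t) ∧
    ∀ ε : ℝ, 0 < ε →
      (∃ g : ℝ → ℝ, MonotoneOn g (Ioi 0) ∧ EquivOn (Ioi 0) (fun t => t ^ ε * b t) g) ∧
      (∃ g : ℝ → ℝ, AntitoneOn g (Ioi 0) ∧ EquivOn (Ioi 0) (fun t => t ^ (-ε) * b t) g)

/-- A quasi-Banach space continuously embedded into the ambient (Hausdorff) space `E`,
recorded via its extended-real-valued quasi-norm; the space itself is the set of
vectors of finite quasi-norm. -/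
structure QuasiBanach (E : Type*) [AddCommGroup E] [Module ℝ E] where
  N : E → ℝ≥0∞
  zero : N 0 = 0
  definite : ∀ x, N x = 0 → x = 0
  smul : ∀ (c : ℝ) (x : E), N (c • x) = ENNReal.ofReal |c| * N x
  quasi : ∃ C : ℝ≥0∞, 1 ≤ C ∧ C ≠ ∞ ∧ ∀ x y, N (x + y) ≤ C * (N x + N y)
  complete : ∀ f : ℕ → E,
    (∀ ε : ℝ≥0∞, 0 < ε → ∃ M : ℕ, ∀ m ≥ M, ∀ n ≥ M, N (f m - f n) < ε) →
    (∀ n, N (f n) ≠ ∞) →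
    ∃ g : E, N g ≠ ∞ ∧ Tendsto (fun n => N (f n - g)) atTop (nhds 0)

variable {E : Type*} [AddCommGroup E] [Module ℝ E]

/-- The Peetre K-functional of the couple whose quasi-norms are `N₀`, `N₁`. -/
def Kf (N₀ N₁ : E → ℝ≥0∞) (t : ℝ) (f : E) : ℝ≥0∞ :=
  ⨅ g : E, N₀ g + ENNReal.ofReal t * N₁ (f - g)

/-- The quasi-norm of the real interpolation space `Ā_{θ,q;b}`. -/
def normK (N₀ N₁ : E → ℝ≥0∞) (θ : ℝ) (q : ℝ≥0∞) (b : ℝ → ℝ) (f : E) : ℝ≥0∞ :=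
  LqNorm q (Ioi 0) fun u =>
    ENNReal.ofReal (u ^ (-θ - q⁻¹.toReal) * b u) * Kf N₀ N₁ u f

/-- The quasi-norm of the limiting interpolation space `Ā^𝓛_{σ,r,b,q,a}`. -/
def normL (N₀ N₁ : E → ℝ≥0∞) (σ : ℝ) (r q : ℝ≥0∞) (b a : ℝ → ℝ) (f : E) : ℝ≥0∞ :=
  LqNorm r (Ioi 0) fun t =>
    ENNReal.ofReal (t ^ (-(r⁻¹.toReal)) * (b t / a t)) *
      LqNorm q (Ioo 0 t) fun u =>
        ENNReal.ofReal (u ^ (-σ - q⁻¹.toReal) * a u) * Kf N₀ N₁ u f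

/-- The quasi-norm of the limiting interpolation space `Ā^𝓡_{σ,r,b,q,a}`. -/
def normR (N₀ N₁ : E → ℝ≥0∞) (σ : ℝ) (r q : ℝ≥0∞) (b a : ℝ → ℝ) (f : E) : ℝ≥0∞ :=
  LqNorm r (Ioi 0) fun t =>
    ENNReal.ofReal (t ^ (-(r⁻¹.toReal)) * (b t / a t)) *
      LqNorm q (Ioi t) fun u =>
        ENNReal.ofReal (u ^ (-σ - q⁻¹.toReal) * a u) * Kf N₀ N₁ u f

/-- Two (extended-real-valued) quasi-norms define the same space with
equivalent quasi-norms. -/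
def EquivNorms (nX nY : E → ℝ≥0∞) : Prop :=
  ∃ C : ℝ≥0∞, 0 < C ∧ C ≠ ∞ ∧ ∀ f : E, C⁻¹ * nY f ≤ nX f ∧ nX f ≤ C * nY f

theorem one_le_two_rpow {p : ℝ} (hp : 0 ≤ p) : (1:ℝ≥0∞) ≤ 2 ^ p := by
  have := ENNReal.rpow_le_rpow (show (1:ℝ≥0∞) ≤ 2 by norm_num) hp
  rwa [ENNReal.one_rpow] at this

theorem LqNorm_mono {q : ℝ≥0∞} {s : Set ℝ} (hs : MeasurableSet s) {g h : ℝ → ℝ≥0∞}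
    (hgh : ∀ u ∈ s, g u ≤ h u) : LqNorm q s g ≤ LqNorm q s h := by
  unfold LqNorm
  have h1 : g ≤ᵐ[volume.restrict s] h := (ae_restrict_iff' hs).2 (Eventually.of_forall hgh)
  split_ifs with hq
  · exact essSup_mono_ae h1
  · refine ENNReal.rpow_le_rpow ?_ ENNReal.toReal_nonneg
    refine lintegral_mono_ae ?_
    filter_upwards [h1] with u hu
    exact ENNReal.rpow_le_rpow hu ENNReal.toReal_nonneg

theorem LqNorm_mono_set {q : ℝ≥0∞} {s t : Set ℝ} (hst : s ⊆ t) (g : ℝ → ℝ≥0∞) :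
    LqNorm q s g ≤ LqNorm q t g := by
  unfold LqNorm
  split_ifs with hq
  · exact essSup_mono_measure (Measure.absolutelyContinuous_of_le (Measure.restrict_mono_set _ hst))
  · refine ENNReal.rpow_le_rpow ?_ ENNReal.toReal_nonneg
    exact lintegral_mono_set hst

theorem mul_rpow_inv {q : ℝ≥0∞} (hq0 : 0 < q) (hq : q ≠ ∞) (c : ℝ≥0∞) :
    (c ^ q.toReal) ^ q⁻¹.toReal = c := by
  rw [ENNReal.toReal_inv, ENNReal.rpow_rpow_inv]
  exact (ENNReal.toReal_pos hq0.ne' hq).ne'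

theorem LqNorm_const_mul_ge {q : ℝ≥0∞} (hq0 : 0 < q) (s : Set ℝ) (c : ℝ≥0∞) (g : ℝ → ℝ≥0∞) :
    c * LqNorm q s g ≤ LqNorm q s (fun u => c * g u) := by
  unfold LqNorm
  split_ifs with hq
  · exact ENNReal.essSup_const_mul.ge
  · simp_rw [ENNReal.mul_rpow_of_nonneg _ _ (ENNReal.toReal_nonneg (a := q))]
    calc c * _ = ((c ^ q.toReal) * ∫⁻ t in s, g t ^ q.toReal) ^ q⁻¹.toReal := by
          rw [ENNReal.mul_rpow_of_nonneg _ _ ENNReal.toReal_nonneg, mul_rpow_inv hq0 hq]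
      _ ≤ _ := ENNReal.rpow_le_rpow (lintegral_const_mul_le _ _) ENNReal.toReal_nonneg

theorem LqNorm_const_mul {q : ℝ≥0∞} (hq0 : 0 < q) (s : Set ℝ) {c : ℝ≥0∞} (hc : c ≠ ∞)
    (g : ℝ → ℝ≥0∞) :
    LqNorm q s (fun u => c * g u) = c * LqNorm q s g := by
  unfold LqNorm
  split_ifs with hq
  · exact ENNReal.essSup_const_mul
  · simp_rw [ENNReal.mul_rpow_of_nonneg _ _ (ENNReal.toReal_nonneg (a := q))]
    rw [lintegral_const_mul' _ _ (ENNReal.rpow_ne_top_of_nonneg ENNReal.toReal_nonneg hc),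
      ENNReal.mul_rpow_of_nonneg _ _ ENNReal.toReal_nonneg, mul_rpow_inv hq0 hq]

theorem LqNorm_mul_const {q : ℝ≥0∞} (hq0 : 0 < q) (s : Set ℝ) {c : ℝ≥0∞} (hc : c ≠ ∞)
    (g : ℝ → ℝ≥0∞) :
    LqNorm q s (fun u => g u * c) = LqNorm q s g * c := by
  simp_rw [mul_comm _ c]; exact LqNorm_const_mul hq0 s hc g

theorem add_rpow_le_two (x y : ℝ≥0∞) {p : ℝ} (hp : 0 ≤ p) :
    (x + y) ^ p ≤ 2 ^ p * (x ^ p + y ^ p) := by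
  calc (x + y) ^ p ≤ (2 * max x y) ^ p := by
        refine ENNReal.rpow_le_rpow ?_ hp
        rw [two_mul]; exact add_le_add (le_max_left _ _) (le_max_right _ _)
    _ = 2 ^ p * (max x y) ^ p := ENNReal.mul_rpow_of_nonneg _ _ hp
    _ ≤ _ := by
        gcongr
        rcases le_total x y with h | h
        · rw [max_eq_right h]; exact le_add_self
        · rw [max_eq_left h]; exact le_self_add

theorem LqNorm_add {q : ℝ≥0∞} (hq0 : 0 < q) : ∃ D : ℝ≥0∞, D ≠ ∞ ∧ 1 ≤ D ∧
    ∀ (s : Set ℝ) (g h : ℝ → ℝ≥0∞), AEMeasurable g (volume.restrict s) →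
      LqNorm q s (fun u => g u + h u) ≤ D * (LqNorm q s g + LqNorm q s h) := by
  by_cases hq : q = ∞
  · refine ⟨1, one_ne_top, le_rfl, fun s g h _ => ?_⟩
    simp only [LqNorm, hq, if_true, one_mul]
    exact ENNReal.essSup_add_le g h
  · have hp : 0 ≤ q.toReal := ENNReal.toReal_nonneg
    have hp' : 0 ≤ q⁻¹.toReal := ENNReal.toReal_nonneg
    refine ⟨2 * 2 ^ q⁻¹.toReal, ?_, ?_, fun s g h hg => ?_⟩
    · exact ENNReal.mul_ne_top (by simp) (ENNReal.rpow_ne_top_of_nonneg hp' (by simp))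
    · calc (1:ℝ≥0∞) = 1 * 1 := by simp
        _ ≤ _ := mul_le_mul' (by norm_num) (one_le_two_rpow hp')
    · simp only [LqNorm, hq, if_false]
      calc (∫⁻ t in s, (g t + h t) ^ q.toReal) ^ q⁻¹.toReal
          ≤ (∫⁻ t in s, 2 ^ q.toReal * (g t ^ q.toReal + h t ^ q.toReal)) ^ q⁻¹.toReal := by
            gcongr with t
            exact add_rpow_le_two _ _ hp
        _ = 2 * ((∫⁻ t in s, g t ^ q.toReal) + ∫⁻ t in s, h t ^ q.toReal) ^ q⁻¹.toReal := by
            rw [lintegral_const_mul' _ _ (ENNReal.rpow_ne_top_of_nonneg hp (by simp)),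
              ENNReal.mul_rpow_of_nonneg _ _ hp', mul_rpow_inv hq0 hq,
              lintegral_add_left' (hg.pow_const _)]
        _ ≤ 2 * (2 ^ q⁻¹.toReal * _) := by
            gcongr
            exact add_rpow_le_two _ _ hp'
        _ = _ := by rw [mul_assoc]

theorem LqNorm_union {q : ℝ≥0∞} (hq0 : 0 < q) : ∃ D : ℝ≥0∞, D ≠ ∞ ∧ 1 ≤ D ∧
    ∀ (s t : Set ℝ) (g : ℝ → ℝ≥0∞),
      LqNorm q (s ∪ t) g ≤ D * (LqNorm q s g + LqNorm q t g) := by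
  by_cases hq : q = ∞
  · refine ⟨1, one_ne_top, le_rfl, fun s t g => ?_⟩
    simp only [LqNorm, hq, if_true, one_mul]
    refine essSup_le_of_ae_le _ ?_
    refine (ae_restrict_union_iff s t _).2 ⟨?_, ?_⟩
    · filter_upwards [ENNReal.ae_le_essSup (μ := volume.restrict s) g] with u hu
      exact hu.trans le_self_add
    · filter_upwards [ENNReal.ae_le_essSup (μ := volume.restrict t) g] with u hu
      exact hu.trans le_add_self
  · have hp' : 0 ≤ q⁻¹.toReal := ENNReal.toReal_nonneg
    refine ⟨2 ^ q⁻¹.toReal, ENNReal.rpow_ne_top_of_nonneg hp' (by simp),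
      one_le_two_rpow hp', fun s t g => ?_⟩
    simp only [LqNorm, hq, if_false]
    exact (ENNReal.rpow_le_rpow (lintegral_union_le _ _ _) hp').trans (add_rpow_le_two _ _ hp')

theorem LqNorm_const_Ioo {q : ℝ≥0∞} (hq0 : 0 < q) {x y : ℝ} (hxy : x < y) (M : ℝ≥0∞) :
    LqNorm q (Ioo x y) (fun _ => M) = M * ENNReal.ofReal ((y - x) ^ q⁻¹.toReal) := by
  unfold LqNorm
  split_ifs with hq
  · rw [essSup_const]
    · simp [hq]
    · intro h
      have := congrArg (fun μ => μ univ) h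
      simp at this
      linarith
  · rw [lintegral_const, Measure.restrict_apply_univ, Real.volume_Ioo,
      ENNReal.mul_rpow_of_nonneg _ _ ENNReal.toReal_nonneg, mul_rpow_inv hq0 hq,
      ENNReal.ofReal_rpow_of_nonneg (by linarith) ENNReal.toReal_nonneg]

theorem LqNorm_lower {q : ℝ≥0∞} (hq0 : 0 < q) {x : ℝ} (hx : 0 < x) {M : ℝ≥0∞} {g : ℝ → ℝ≥0∞}
    (h : ∀ u ∈ Ioo x (2 * x), M * ENNReal.ofReal (u ^ (-(q⁻¹.toReal))) ≤ g u) :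
    M ≤ ENNReal.ofReal (2 ^ q⁻¹.toReal) * LqNorm q (Ioo x (2 * x)) g := by
  have hp' : 0 ≤ q⁻¹.toReal := ENNReal.toReal_nonneg
  have h1 : LqNorm q (Ioo x (2 * x)) (fun _ => M * ENNReal.ofReal ((2 * x) ^ (-(q⁻¹.toReal))))
      ≤ LqNorm q (Ioo x (2 * x)) g := by
    refine LqNorm_mono measurableSet_Ioo fun u hu => le_trans ?_ (h u hu)
    gcongr M * ENNReal.ofReal ?_
    exact Real.rpow_le_rpow_of_nonpos (by linarith [hu.1]) hu.2.le (by linarith)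
  rw [LqNorm_const_Ioo hq0 (by linarith)] at h1
  refine le_trans (le_of_eq ?_) (mul_le_mul_right h1 _)
  have h2 : (2:ℝ) ^ q⁻¹.toReal * ((2 * x) ^ (-(q⁻¹.toReal)) * (2 * x - x) ^ q⁻¹.toReal) = 1 := by
    rw [Real.mul_rpow (by norm_num) hx.le, Real.rpow_neg (by norm_num), Real.rpow_neg hx.le]
    have := (Real.rpow_pos_of_pos hx q⁻¹.toReal).ne'
    have := (Real.rpow_pos_of_pos (show (0:ℝ) < 2 by norm_num) q⁻¹.toReal).ne'
    have h3 : 2 * x - x = x := by ring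
    rw [h3]
    field_simp
  rw [mul_assoc M, ← ENNReal.ofReal_mul (by positivity), mul_left_comm,
    ← ENNReal.ofReal_mul (by positivity), h2]
  simp

theorem sv_bound {b : ℝ → ℝ} (hb : SlowlyVarying b) {ε : ℝ} (hε : 0 < ε) :
    ∃ C : ℝ, 0 < C ∧ ∀ s t, 0 < s → s ≤ t →
      s ^ ε * b s ≤ C * (t ^ ε * b t) ∧ t ^ (-ε) * b t ≤ C * (s ^ (-ε) * b s) := by
  obtain ⟨⟨g, hg, C, hC, h1⟩, ⟨g', hg', C', hC', h2⟩⟩ := hb.2.2 ε hε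
  have key : ∀ {C x y f1 f2 : ℝ}, 0 < C → f1 ≤ C * x → x ≤ y → C⁻¹ * y ≤ f2 →
      f1 ≤ C * C * f2 := by
    intro C x y f1 f2 hC h1 h2 h3
    have : y ≤ C * f2 := by rwa [inv_mul_le_iff₀ hC] at h3
    nlinarith
  refine ⟨C * C + C' * C', by positivity, fun s t hs hst => ?_⟩
  have ht := hs.trans_le hst
  have bs := hb.2.1 s hs
  have bt := hb.2.1 t ht
  have e1 := key hC (h1 s hs).2 (hg hs ht hst) (h1 t ht).1
  have e2 := key hC' (h2 t ht).2 (hg' hs ht hst) (h2 s hs).1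
  simp only at e1 e2
  have p1 : 0 ≤ t ^ ε * b t := by positivity
  have p2 : 0 ≤ s ^ (-ε) * b s := by positivity
  constructor
  · nlinarith [mul_nonneg (mul_pos hC' hC').le p1]
  · nlinarith [mul_nonneg (mul_pos hC hC).le p2]

/-- ratio form -/
theorem sv_ratio {b : ℝ → ℝ} (hb : SlowlyVarying b) :
    ∃ C : ℝ, 0 < C ∧ ∀ s t, 0 < s → s ≤ t →
      b s ≤ C * (t / s) * b t ∧ b t ≤ C * (t / s) * b s := by
  obtain ⟨C, hC, h⟩ := sv_bound hb one_pos
  refine ⟨C, hC, fun s t hs hst => ?_⟩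
  have ht := hs.trans_le hst
  obtain ⟨h1, h2⟩ := h s t hs hst
  rw [Real.rpow_one, Real.rpow_one] at h1
  rw [Real.rpow_neg_one, Real.rpow_neg_one] at h2
  constructor
  · rw [show C * (t / s) * b t = C * (t * b t) / s by ring, le_div_iff₀ hs]
    linarith
  · rw [show C * (t / s) * b s = (C * (s⁻¹ * b s)) * t by field_simp]
    rw [inv_mul_le_iff₀ ht] at h2
    linarith

theorem LqNorm_rpow_Ioc {q : ℝ≥0∞} (hq0 : 0 < q) {β : ℝ} (hβ : 0 < β) :
    ∃ C : ℝ≥0∞, C ≠ ∞ ∧ ∀ s : ℝ, 0 < s →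
      LqNorm q (Ioc 0 s) (fun u => ENNReal.ofReal (u ^ (β - q⁻¹.toReal))) ≤
        C * ENNReal.ofReal (s ^ β) := by
  by_cases hq : q = ∞
  · refine ⟨1, one_ne_top, fun s hs => ?_⟩
    simp only [LqNorm, hq, if_true, one_mul]
    refine essSup_le_of_ae_le _ ?_
    refine (ae_restrict_iff' measurableSet_Ioc).2 (Eventually.of_forall fun u hu => ?_)
    simp only [inv_top, toReal_zero, sub_zero]
    exact ENNReal.ofReal_le_ofReal (Real.rpow_le_rpow hu.1.le hu.2 hβ.le)
  · have hp : 0 < q.toReal := ENNReal.toReal_pos hq0.ne' hq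
    have hb : 0 < β * q.toReal := by positivity
    refine ⟨ENNReal.ofReal (((β * q.toReal)⁻¹) ^ q⁻¹.toReal), ENNReal.ofReal_ne_top,
      fun s hs => ?_⟩
    simp only [LqNorm, hq, if_false]
    have e : ∫⁻ u in Ioc 0 s, ENNReal.ofReal (u ^ (β - q⁻¹.toReal)) ^ q.toReal
        = ENNReal.ofReal (s ^ (β * q.toReal) * (β * q.toReal)⁻¹) := by
      have e1 : ∀ u ∈ Ioc 0 s, ENNReal.ofReal (u ^ (β - q⁻¹.toReal)) ^ q.toReal
          = ENNReal.ofReal (u ^ (β * q.toReal - 1)) := by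
        intro u hu
        have hu := hu.1
        rw [ENNReal.ofReal_rpow_of_pos (by positivity), ← Real.rpow_mul hu.le, sub_mul,
          ENNReal.toReal_inv, inv_mul_cancel₀ hp.ne']
      rw [setLIntegral_congr_fun measurableSet_Ioc e1, ← ofReal_integral_eq_lintegral_ofReal]
      · rw [← intervalIntegral.integral_of_le hs.le, integral_rpow (Or.inl (by linarith))]
        simp [Real.zero_rpow hb.ne', div_eq_mul_inv]
      · rw [← IntegrableOn, ← intervalIntegrable_iff_integrableOn_Ioc_of_le hs.le]
        exact intervalIntegral.intervalIntegrable_rpow' (by linarith)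
      · refine (ae_restrict_iff' measurableSet_Ioc).2 (Eventually.of_forall fun u hu => ?_)
        exact Real.rpow_nonneg hu.1.le _
    rw [e, ENNReal.ofReal_rpow_of_nonneg (by positivity) ENNReal.toReal_nonneg,
      Real.mul_rpow (by positivity) (by positivity), ← Real.rpow_mul hs.le, mul_assoc β,
      ENNReal.toReal_inv, mul_inv_cancel₀ hp.ne', mul_one, mul_comm (s ^ β),
      ENNReal.ofReal_mul (by positivity)]

theorem LqNorm_rpow_Ioi {q : ℝ≥0∞} (hq0 : 0 < q) {β : ℝ} (hβ : 0 < β) :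
    ∃ C : ℝ≥0∞, C ≠ ∞ ∧ ∀ s : ℝ, 0 < s →
      LqNorm q (Ioi s) (fun u => ENNReal.ofReal (u ^ (-β - q⁻¹.toReal))) ≤
        C * ENNReal.ofReal (s ^ (-β)) := by
  by_cases hq : q = ∞
  · refine ⟨1, one_ne_top, fun s hs => ?_⟩
    simp only [LqNorm, hq, if_true, one_mul]
    refine essSup_le_of_ae_le _ ?_
    refine (ae_restrict_iff' measurableSet_Ioi).2 (Eventually.of_forall fun u hu => ?_)
    simp only [inv_top, toReal_zero, sub_zero]
    exact ENNReal.ofReal_le_ofReal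
      (Real.rpow_le_rpow_of_nonpos hs (le_of_lt hu) (by linarith))
  · have hp : 0 < q.toReal := ENNReal.toReal_pos hq0.ne' hq
    have hb : 0 < β * q.toReal := by positivity
    refine ⟨ENNReal.ofReal (((β * q.toReal)⁻¹) ^ q⁻¹.toReal), ENNReal.ofReal_ne_top,
      fun s hs => ?_⟩
    simp only [LqNorm, hq, if_false]
    have e : ∫⁻ u in Ioi s, ENNReal.ofReal (u ^ (-β - q⁻¹.toReal)) ^ q.toReal
        = ENNReal.ofReal (s ^ (-β * q.toReal) * (β * q.toReal)⁻¹) := by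
      have e1 : ∀ u ∈ Ioi s, ENNReal.ofReal (u ^ (-β - q⁻¹.toReal)) ^ q.toReal
          = ENNReal.ofReal (u ^ (-(β * q.toReal) - 1)) := by
        intro u hu
        have hu : 0 < u := hs.trans hu
        rw [ENNReal.ofReal_rpow_of_pos (by positivity), ← Real.rpow_mul hu.le, sub_mul,
          ENNReal.toReal_inv, inv_mul_cancel₀ hp.ne', neg_mul]
      rw [setLIntegral_congr_fun measurableSet_Ioi e1, ← ofReal_integral_eq_lintegral_ofReal]
      · rw [integral_Ioi_rpow_of_lt (by linarith) hs]
        congr 1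
        rw [show -(β * q.toReal) - 1 + 1 = -(β * q.toReal) by ring, neg_mul, neg_div_neg_eq,
          div_eq_mul_inv]
      · exact integrableOn_Ioi_rpow_of_lt (by linarith) hs
      · refine (ae_restrict_iff' measurableSet_Ioi).2 (Eventually.of_forall fun u hu => ?_)
        exact Real.rpow_nonneg (hs.trans hu).le _
    rw [e, ENNReal.ofReal_rpow_of_nonneg (by positivity) ENNReal.toReal_nonneg,
      Real.mul_rpow (by positivity) (by positivity), ← Real.rpow_mul hs.le, mul_assoc (-β),
      ENNReal.toReal_inv, mul_inv_cancel₀ hp.ne', mul_one, mul_comm (s ^ (-β)),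
      ENNReal.ofReal_mul (by positivity)]

theorem sv_Ioc {q : ℝ≥0∞} (hq0 : 0 < q) {α : ℝ} (hα : 0 < α) {b : ℝ → ℝ}
    (hb : SlowlyVarying b) :
    ∃ C : ℝ≥0∞, C ≠ ∞ ∧ ∀ s : ℝ, 0 < s →
      LqNorm q (Ioc 0 s) (fun u => ENNReal.ofReal (u ^ (α - q⁻¹.toReal) * b u)) ≤
        C * ENNReal.ofReal (s ^ α * b s) := by
  obtain ⟨C, hC, h⟩ := sv_bound hb (half_pos hα)
  obtain ⟨C', hC', h'⟩ := LqNorm_rpow_Ioc hq0 (half_pos hα)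
  refine ⟨C' * ENNReal.ofReal C, ENNReal.mul_ne_top hC' ENNReal.ofReal_ne_top, fun s hs => ?_⟩
  have bs := hb.2.1 s hs
  calc _ ≤ LqNorm q (Ioc 0 s) (fun u => ENNReal.ofReal (C * (s ^ (α / 2) * b s)) *
            ENNReal.ofReal (u ^ (α / 2 - q⁻¹.toReal))) := by
        refine LqNorm_mono measurableSet_Ioc fun u hu => ?_
        have hu0 := hu.1
        rw [← ENNReal.ofReal_mul (by positivity)]
        refine ENNReal.ofReal_le_ofReal ?_
        rw [show α - q⁻¹.toReal = α / 2 + (α / 2 - q⁻¹.toReal) by ring, Real.rpow_add hu0,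
          mul_right_comm]
        exact mul_le_mul_of_nonneg_right (h u s hu.1 hu.2).1 (by positivity)
    _ = ENNReal.ofReal (C * (s ^ (α / 2) * b s)) *
          LqNorm q (Ioc 0 s) (fun u => ENNReal.ofReal (u ^ (α / 2 - q⁻¹.toReal))) :=
        LqNorm_const_mul hq0 _ ENNReal.ofReal_ne_top _
    _ ≤ ENNReal.ofReal (C * (s ^ (α / 2) * b s)) * (C' * ENNReal.ofReal (s ^ (α / 2))) := by
        gcongr; exact h' s hs
    _ = _ := by
        rw [mul_left_comm, ← ENNReal.ofReal_mul (by positivity), mul_assoc C',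
          ← ENNReal.ofReal_mul hC.le]
        congr 2
        rw [show s ^ α = s ^ (α / 2) * s ^ (α / 2) by rw [← Real.rpow_add hs]; congr 1; ring]
        ring

theorem sv_Ioi {q : ℝ≥0∞} (hq0 : 0 < q) {α : ℝ} (hα : 0 < α) {b : ℝ → ℝ}
    (hb : SlowlyVarying b) :
    ∃ C : ℝ≥0∞, C ≠ ∞ ∧ ∀ s : ℝ, 0 < s →
      LqNorm q (Ioi s) (fun u => ENNReal.ofReal (u ^ (-α - q⁻¹.toReal) * b u)) ≤
        C * ENNReal.ofReal (s ^ (-α) * b s) := by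
  obtain ⟨C, hC, h⟩ := sv_bound hb (half_pos hα)
  obtain ⟨C', hC', h'⟩ := LqNorm_rpow_Ioi hq0 (half_pos hα)
  refine ⟨C' * ENNReal.ofReal C, ENNReal.mul_ne_top hC' ENNReal.ofReal_ne_top, fun s hs => ?_⟩
  have bs := hb.2.1 s hs
  calc _ ≤ LqNorm q (Ioi s) (fun u => ENNReal.ofReal (C * (s ^ (-(α / 2)) * b s)) *
            ENNReal.ofReal (u ^ (-(α / 2) - q⁻¹.toReal))) := by
        refine LqNorm_mono measurableSet_Ioi fun u hu => ?_
        have hu0 : 0 < u := hs.trans hu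
        rw [← ENNReal.ofReal_mul (by positivity)]
        refine ENNReal.ofReal_le_ofReal ?_
        rw [show -α - q⁻¹.toReal = -(α / 2) + (-(α / 2) - q⁻¹.toReal) by ring, Real.rpow_add hu0,
          mul_right_comm]
        exact mul_le_mul_of_nonneg_right (h s u hs (le_of_lt hu)).2 (by positivity)
    _ = ENNReal.ofReal (C * (s ^ (-(α / 2)) * b s)) *
          LqNorm q (Ioi s) (fun u => ENNReal.ofReal (u ^ (-(α / 2) - q⁻¹.toReal))) :=
        LqNorm_const_mul hq0 _ ENNReal.ofReal_ne_top _
    _ ≤ ENNReal.ofReal (C * (s ^ (-(α / 2)) * b s)) * (C' * ENNReal.ofReal (s ^ (-(α / 2)))) := by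
        gcongr; exact h' s hs
    _ = _ := by
        rw [mul_left_comm, ← ENNReal.ofReal_mul (by positivity), mul_assoc C',
          ← ENNReal.ofReal_mul hC.le]
        congr 2
        rw [show s ^ (-α) = s ^ (-(α / 2)) * s ^ (-(α / 2)) by
          rw [← Real.rpow_add hs]; congr 1; ring]
        ring

theorem sv_lower {q : ℝ≥0∞} (hq0 : 0 < q) {α : ℝ} (hα : 0 < α) {b : ℝ → ℝ}
    (hb : SlowlyVarying b) :
    ∃ C : ℝ≥0∞, C ≠ ∞ ∧ ∀ s : ℝ, 0 < s →
      ENNReal.ofReal (s ^ α * b s) ≤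
        C * LqNorm q (Ioo 0 s) (fun u => ENNReal.ofReal (u ^ (α - q⁻¹.toReal) * b u)) := by
  obtain ⟨C, hC, h⟩ := sv_ratio hb
  refine ⟨ENNReal.ofReal (2 ^ α * (2 * C)) * ENNReal.ofReal (2 ^ q⁻¹.toReal),
    ENNReal.mul_ne_top ENNReal.ofReal_ne_top ENNReal.ofReal_ne_top, fun s hs => ?_⟩
  have bs := hb.2.1 s hs
  have e : 2 * (s / 2) = s := by ring
  have h1 := LqNorm_lower hq0 (x := s / 2) (by positivity)
    (M := ENNReal.ofReal ((s / 2) ^ α * (b s / (2 * C))))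
    (g := fun u => ENNReal.ofReal (u ^ (α - q⁻¹.toReal) * b u)) (by
      intro u hu
      rw [e] at hu
      have hu0 : 0 < u := (half_pos hs).trans hu.1
      have bu := hb.2.1 u hu0
      rw [← ENNReal.ofReal_mul (by positivity)]
      refine ENNReal.ofReal_le_ofReal ?_
      rw [sub_eq_add_neg, Real.rpow_add hu0]
      rw [mul_right_comm (u ^ α)]
      refine mul_le_mul_of_nonneg_right ?_ (by positivity)
      refine mul_le_mul (Real.rpow_le_rpow (half_pos hs).le hu.1.le hα.le) ?_ (by positivity)
        (by positivity)
      rw [div_le_iff₀ (by positivity)]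
      have h3 := (h u s hu0 hu.2.le).2
      have h4 : s / u ≤ 2 := by rw [div_le_iff₀ hu0]; linarith [hu.1]
      calc b s ≤ C * (s / u) * b u := h3
        _ ≤ C * 2 * b u := by gcongr
        _ = _ := by ring)
  rw [e] at h1
  have h2 : ENNReal.ofReal (s ^ α * b s) =
      ENNReal.ofReal (2 ^ α * (2 * C)) * ENNReal.ofReal ((s / 2) ^ α * (b s / (2 * C))) := by
    rw [← ENNReal.ofReal_mul (by positivity)]
    congr 1
    rw [Real.div_rpow hs.le (by norm_num)]
    field_simp
  rw [h2, mul_assoc]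
  gcongr
  refine h1.trans ?_
  gcongr
  exact LqNorm_mono_set (Ioo_subset_Ioo_left (half_pos hs).le) _

theorem sv_W_lower {r : ℝ≥0∞} (hr0 : 0 < r) {a b : ℝ → ℝ}
    (ha : SlowlyVarying a) (hb : SlowlyVarying b) :
    ∃ C : ℝ≥0∞, C ≠ ∞ ∧ ∀ t : ℝ, 0 < t →
      ENNReal.ofReal (b t / a t) ≤
        C * LqNorm r (Ioi t) (svWgt r (fun s => b s / a s)) := by
  obtain ⟨C, hC, h⟩ := sv_ratio hb
  obtain ⟨C', hC', h'⟩ := sv_ratio ha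
  refine ⟨ENNReal.ofReal (4 * C * C') * ENNReal.ofReal (2 ^ r⁻¹.toReal),
    ENNReal.mul_ne_top ENNReal.ofReal_ne_top ENNReal.ofReal_ne_top, fun s hs => ?_⟩
  have bs := hb.2.1 s hs
  have hs_a := ha.2.1 s hs
  have h1 := LqNorm_lower hr0 hs
    (M := ENNReal.ofReal ((b s / a s) / (4 * C * C')))
    (g := svWgt r (fun s => b s / a s)) (by
      intro u hu
      have hu0 : 0 < u := lt_trans hs hu.1
      have bu := hb.2.1 u hu0
      have au := ha.2.1 u hu0
      unfold svWgt
      rw [← ENNReal.ofReal_mul (by positivity), mul_comm]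
      refine ENNReal.ofReal_le_ofReal ?_
      refine mul_le_mul_of_nonneg_left ?_ (by positivity)
      have h4 : u / s ≤ 2 := by rw [div_le_iff₀ hs]; linarith [hu.2]
      have h5 : b s ≤ C * 2 * b u :=
        ((h s u hs hu.1.le).1).trans (by gcongr)
      have h6 : a u ≤ C' * 2 * a s :=
        ((h' s u hs hu.1.le).2).trans (by gcongr)
      rw [div_div, div_le_div_iff₀ (by positivity) au]
      calc b s * a u ≤ (C * 2 * b u) * (C' * 2 * a s) := by gcongr
        _ = _ := by ring)
  have h2 : ENNReal.ofReal (b s / a s) =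
      ENNReal.ofReal (4 * C * C') * ENNReal.ofReal ((b s / a s) / (4 * C * C')) := by
    rw [← ENNReal.ofReal_mul (by positivity)]
    congr 1
    field_simp
  rw [h2, mul_assoc (ENNReal.ofReal _)]
  gcongr
  refine h1.trans ?_
  gcongr
  exact LqNorm_mono_set Ioo_subset_Ioi_self _

theorem sv_W_finite {r : ℝ≥0∞} (hr0 : 0 < r) {a b : ℝ → ℝ}
    (ha : SlowlyVarying a) (hb : SlowlyVarying b)
    (hfin : LqNorm r (Ioi 1) (svWgt r (fun s => b s / a s)) ≠ ∞) (t : ℝ) (ht : 0 < t) :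
    LqNorm r (Ioi t) (svWgt r (fun s => b s / a s)) ≠ ∞ := by
  rcases le_or_gt 1 t with h1 | h1
  · exact ne_top_of_le_ne_top hfin (LqNorm_mono_set (Ioi_subset_Ioi h1) _)
  obtain ⟨D, hD, -, hU⟩ := LqNorm_union hr0
  obtain ⟨C, hC, h⟩ := sv_ratio hb
  obtain ⟨C', hC', h'⟩ := sv_ratio ha
  have h2 := LqNorm_mono_set (q := r) (s := Ioi t) (t := Ioo t 2 ∪ Ioi 1) (by
    intro x hx
    rcases le_or_gt x 1 with h | h
    · exact Or.inl ⟨hx, by linarith⟩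
    · exact Or.inr h) (svWgt r (fun s => b s / a s))
  refine ne_top_of_le_ne_top ?_ (h2.trans (hU _ _ _))
  refine ENNReal.mul_ne_top hD (ENNReal.add_ne_top.2 ⟨?_, hfin⟩)
  have h3 : LqNorm r (Ioo t 2) (svWgt r (fun s => b s / a s)) ≤ LqNorm r (Ioo t 2)
      (fun _ => ENNReal.ofReal (t ^ (-(r⁻¹.toReal)) *
        ((C * (2 / t) * b 2) / (a 2 / (C' * (2 / t)))))) := by
    refine LqNorm_mono measurableSet_Ioo fun u hu => ENNReal.ofReal_le_ofReal ?_
    have hu0 : 0 < u := lt_trans ht hu.1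
    have bu := hb.2.1 u hu0
    have au := ha.2.1 u hu0
    have a2 := ha.2.1 2 (by simp)
    have b2 := hb.2.1 2 (by simp)
    have h4 : 2 / u ≤ 2 / t := by gcongr; exact hu.1.le
    refine mul_le_mul (Real.rpow_le_rpow_of_nonpos ht hu.1.le (by simp)) ?_ (by positivity)
      (by positivity)
    refine div_le_div₀ (by positivity) ?_ (by positivity) ?_
    · exact ((h u 2 hu0 hu.2.le).1).trans (by gcongr)
    · rw [div_le_iff₀ (by positivity)]
      exact ((h' u 2 hu0 hu.2.le).2).trans (by rw [mul_comm]; gcongr)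
  refine ne_top_of_le_ne_top ?_ h3
  rw [LqNorm_const_Ioo hr0 (by linarith)]
  exact ENNReal.mul_ne_top ENNReal.ofReal_ne_top ENNReal.ofReal_ne_top

theorem Kf_mono (N₀ N₁ : E → ℝ≥0∞) (f : E) : Monotone (fun t => Kf N₀ N₁ t f) := by
  intro s t hst
  exact iInf_mono fun g => add_le_add le_rfl (mul_le_mul_left (ENNReal.ofReal_le_ofReal hst) _)

theorem Kf_le_left (A₀ A₁ : QuasiBanach E) (t : ℝ) (f : E) : Kf A₀.N A₁.N t f ≤ A₀.N f := by
  refine (iInf_le _ f).trans ?_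
  simp [A₁.zero]

theorem Kf_le_right (A₀ A₁ : QuasiBanach E) (t : ℝ) (f : E) :
    Kf A₀.N A₁.N t f ≤ ENNReal.ofReal t * A₁.N f := by
  refine (iInf_le _ 0).trans ?_
  simp [A₀.zero]

theorem QB_neg (A : QuasiBanach E) (f : E) : A.N (-f) = A.N f := by
  have := A.smul (-1) f
  simpa using this

theorem Kf_quasi (A₀ A₁ : QuasiBanach E) : ∃ C : ℝ≥0∞, C ≠ ∞ ∧ 1 ≤ C ∧ ∀ (t : ℝ) (f g : E),
    Kf A₀.N A₁.N t (f + g) ≤ C * (Kf A₀.N A₁.N t f + Kf A₀.N A₁.N t g) := by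
  obtain ⟨C₀, h0, h0', h0q⟩ := A₀.quasi
  obtain ⟨C₁, h1, h1', h1q⟩ := A₁.quasi
  refine ⟨max C₀ C₁, by simp [h0', h1'], h0.trans (le_max_left _ _), fun t f g => ?_⟩
  have hC0 : max C₀ C₁ ≠ 0 := (zero_lt_one.trans_le (h0.trans (le_max_left _ _))).ne'
  have hCt : max C₀ C₁ ≠ ∞ := by simp [h0', h1']
  conv_rhs => unfold Kf
  rw [ENNReal.iInf_add, ENNReal.mul_iInf_of_ne hC0 hCt]
  refine le_iInf fun x => ?_
  rw [ENNReal.add_iInf, ENNReal.mul_iInf_of_ne hC0 hCt]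
  refine le_iInf fun y => ?_
  refine (iInf_le _ (x + y)).trans ?_
  have e : f + g - (x + y) = (f - x) + (g - y) := by abel
  rw [e]
  calc _ ≤ max C₀ C₁ * (A₀.N x + A₀.N y) +
        ENNReal.ofReal t * (max C₀ C₁ * (A₁.N (f - x) + A₁.N (g - y))) := by
        gcongr
        · exact (h0q _ _).trans (by gcongr; exact le_max_left _ _)
        · exact (h1q _ _).trans (by gcongr; exact le_max_right _ _)
    _ = _ := by ring

theorem Kf_ratio (N₀ N₁ : E → ℝ≥0∞) (f : E) {u t : ℝ} (hu : 0 < u) (hut : u ≤ t) :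
    ENNReal.ofReal (u / t) * Kf N₀ N₁ t f ≤ Kf N₀ N₁ u f := by
  have ht := hu.trans_le hut
  refine le_iInf fun g => ?_
  calc _ ≤ ENNReal.ofReal (u / t) * (N₀ g + ENNReal.ofReal t * N₁ (f - g)) := by
        gcongr; exact iInf_le _ g
    _ = ENNReal.ofReal (u / t) * N₀ g + ENNReal.ofReal u * N₁ (f - g) := by
        rw [mul_add, ← mul_assoc, ← ENNReal.ofReal_mul (by positivity),
          div_mul_cancel₀ _ ht.ne']
    _ ≤ _ := by
        gcongr
        refine mul_le_of_le_one_left' ?_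
        rw [ENNReal.ofReal_le_one, div_le_one ht]; exact hut

/-- Shift estimate for the outer part of the inner norm. -/
theorem inner_shift {q : ℝ≥0∞} (hq0 : 0 < q) {θ : ℝ} (hθ : 0 < θ) {a : ℝ → ℝ}
    (ha : SlowlyVarying a) {Ck : ℝ≥0∞} (hCk : Ck ≠ ∞) :
    ∃ M : ℝ≥0∞, M ≠ ∞ ∧ ∀ (k₁ k₂ : ℝ → ℝ≥0∞) (n : ℝ≥0∞), Monotone k₂ → n ≠ ∞ →
      (∀ u, k₁ u ≤ Ck * (k₂ u + n)) → ∀ t s : ℝ, 0 < t →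
      LqNorm q (Ioo t s) (fun u => ENNReal.ofReal (u ^ (-θ - q⁻¹.toReal) * a u) * k₁ u) ≤
        M * (LqNorm q (Ioo t s) (fun u => ENNReal.ofReal (u ^ (-θ - q⁻¹.toReal) * a u) * k₂ u) +
          n * ENNReal.ofReal (t ^ (-θ) * a t)) := by
  obtain ⟨D, hD, hD1, hadd⟩ := LqNorm_add hq0
  obtain ⟨C, hC, hv⟩ := sv_Ioi hq0 hθ ha
  refine ⟨Ck * (D * (1 + C)), by finiteness, fun k₁ k₂ n hk₂ hn h t s ht => ?_⟩
  set v : ℝ → ℝ≥0∞ := fun u => ENNReal.ofReal (u ^ (-θ - q⁻¹.toReal) * a u) with hvdef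
  have hvm : AEMeasurable v (volume.restrict (Ioo t s)) := by
    have h1 : AEMeasurable a (volume.restrict (Ioo t s)) :=
      ha.1.mono_measure (Measure.restrict_mono_set _ fun x hx => ht.trans hx.1)
    refine AEMeasurable.ennreal_ofReal (AEMeasurable.mul ?_ h1)
    exact (measurable_id.pow_const _).aemeasurable
  calc LqNorm q (Ioo t s) (fun u => v u * k₁ u)
      ≤ LqNorm q (Ioo t s) (fun u => Ck * (v u * k₂ u + n * v u)) := by
        refine LqNorm_mono measurableSet_Ioo fun u _ => ?_
        calc v u * k₁ u ≤ v u * (Ck * (k₂ u + n)) := by gcongr; exact h u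
          _ = _ := by ring
    _ = Ck * LqNorm q (Ioo t s) (fun u => v u * k₂ u + n * v u) :=
        LqNorm_const_mul hq0 _ hCk _
    _ ≤ Ck * (D * (LqNorm q (Ioo t s) (fun u => v u * k₂ u) +
          LqNorm q (Ioo t s) (fun u => n * v u))) := by
        gcongr
        exact hadd _ _ _ (hvm.mul hk₂.measurable.aemeasurable)
    _ = Ck * (D * (LqNorm q (Ioo t s) (fun u => v u * k₂ u) +
          n * LqNorm q (Ioo t s) v)) := by rw [LqNorm_const_mul hq0 _ hn]
    _ ≤ Ck * (D * (LqNorm q (Ioo t s) (fun u => v u * k₂ u) +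
          n * (C * ENNReal.ofReal (t ^ (-θ) * a t)))) := by
        gcongr
        exact (LqNorm_mono_set Ioo_subset_Ioi_self _).trans (hv t ht)
    _ ≤ Ck * (D * ((1 + C) * (LqNorm q (Ioo t s) (fun u => v u * k₂ u) +
          n * ENNReal.ofReal (t ^ (-θ) * a t)))) := by
        gcongr
        rw [mul_add]
        refine add_le_add (le_mul_of_one_le_left' le_self_add) ?_
        rw [mul_left_comm]
        gcongr
        exact le_add_self
    _ = _ := by ring

/-- From a pointwise bound on the inner norms to one on the outer norm. -/
theorem outer_bound {r : ℝ≥0∞} (hr0 : 0 < r) {a b : ℝ → ℝ}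
    (ha : SlowlyVarying a) (hb : SlowlyVarying b) {M : ℝ≥0∞} (hM : M ≠ ∞) :
    ∃ M' : ℝ≥0∞, M' ≠ ∞ ∧ ∀ (G H : ℝ → ℝ≥0∞) (n : ℝ≥0∞) (t : ℝ), 0 < t → n ≠ ∞ →
      (∀ s ∈ Ioi t, G s ≤ M * (H s + n)) →
      LqNorm r (Ioi t) (fun s => ENNReal.ofReal (s ^ (-(r⁻¹.toReal)) * (b s / a s)) * G s) ≤
      M' * (LqNorm r (Ioi t) (fun s => ENNReal.ofReal (s ^ (-(r⁻¹.toReal)) * (b s / a s)) * H s) +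
        n * LqNorm r (Ioi t) (svWgt r (fun s => b s / a s))) := by
  obtain ⟨D, hD, hD1, hadd⟩ := LqNorm_add hr0
  refine ⟨M * D, by finiteness, fun G H n t ht hn h => ?_⟩
  set w : ℝ → ℝ≥0∞ := fun s => ENNReal.ofReal (s ^ (-(r⁻¹.toReal)) * (b s / a s)) with hwdef
  have hw : svWgt r (fun s => b s / a s) = w := rfl
  have hwm : AEMeasurable w (volume.restrict (Ioi t)) := by
    have hle := Measure.restrict_mono_set (volume : Measure ℝ) (Ioi_subset_Ioi ht.le)
    refine AEMeasurable.ennreal_ofReal (AEMeasurable.mul ?_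
      ((hb.1.mono_measure hle).div (ha.1.mono_measure hle)))
    exact (measurable_id.pow_const _).aemeasurable
  rw [hw]
  calc LqNorm r (Ioi t) (fun u => w u * G u)
      ≤ LqNorm r (Ioi t) (fun u => M * (n * w u + w u * H u)) := by
        refine LqNorm_mono measurableSet_Ioi fun u hu => ?_
        calc w u * G u ≤ w u * (M * (H u + n)) := by gcongr; exact h u hu
          _ = _ := by ring
    _ = M * LqNorm r (Ioi t) (fun u => n * w u + w u * H u) :=
        LqNorm_const_mul hr0 _ hM _
    _ ≤ M * (D * (LqNorm r (Ioi t) (fun u => n * w u) +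
          LqNorm r (Ioi t) (fun u => w u * H u))) := by
        gcongr
        exact hadd _ _ _ (hwm.const_mul _)
    _ = _ := by rw [LqNorm_const_mul hr0 _ hn]; ring

theorem holm_identity {θ t aT : ℝ} {W : ℝ≥0∞} (ht : 0 < t) (ha : 0 < aT) (hW0 : W ≠ 0)
    (hW : W ≠ ∞) :
    ENNReal.ofReal (t ^ θ / (aT * W.toReal)) * (ENNReal.ofReal (t ^ (-θ) * aT) * W) = 1 := by
  have hWp := ENNReal.toReal_pos hW0 hW
  conv_lhs => rw [← ENNReal.ofReal_toReal hW]
  rw [ENNReal.toReal_ofReal hWp.le, ← ENNReal.ofReal_mul (by positivity),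
    ← ENNReal.ofReal_mul (by positivity), Real.rpow_neg ht.le]
  have := (Real.rpow_pos_of_pos ht θ).ne'
  rw [← ENNReal.ofReal_one]
  congr 1
  field_simp

theorem holm_lower
    (A₀ A₁ : QuasiBanach E) (θ : ℝ) (hθ : 0 < θ) (hθ' : θ < 1)
    (q r : ℝ≥0∞) (hq : 0 < q) (hr : 0 < r) (a b : ℝ → ℝ)
    (ha : SlowlyVarying a) (hb : SlowlyVarying b) :
    ∃ C : ℝ≥0∞, C ≠ ∞ ∧ ∀ (f : E) (t : ℝ) (ρ : ℝ≥0∞), 0 < t →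
      ρ * (ENNReal.ofReal (t ^ (-θ) * a t) *
        LqNorm r (Ioi t) (svWgt r (fun s => b s / a s))) = 1 →
      (Kf A₀.N A₁.N t f + ρ *
            LqNorm r (Ioi t) (fun s =>
              ENNReal.ofReal (s ^ (-(r⁻¹.toReal)) * (b s / a s)) *
                LqNorm q (Ioo t s) (fun u =>
                  ENNReal.ofReal (u ^ (-θ - q⁻¹.toReal) * a u) * Kf A₀.N A₁.N u f))) ≤
      C * ⨅ g : E, A₀.N g + ρ * normL A₀.N A₁.N θ r q b a (f - g) := by
  obtain ⟨Ck, hCk, hCk1, hK⟩ := Kf_quasi A₀ A₁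
  obtain ⟨M, hM, hin⟩ := inner_shift hq hθ ha hCk
  obtain ⟨M', hM', hout⟩ := outer_bound hr ha hb hM
  obtain ⟨C4, hC4, hlow⟩ := sv_lower hq (sub_pos.2 hθ') ha
  refine ⟨Ck * (1 + C4) + M', by finiteness, fun f t ρ ht hid => ?_⟩
  rw [ENNReal.mul_iInf_of_ne (by
    have : 1 ≤ Ck * (1 + C4) + M' := le_add_right (one_le_mul hCk1 le_self_add)
    exact (zero_lt_one.trans_le this).ne') (by finiteness)]
  refine le_iInf fun g => ?_
  set h := f - g with hh
  set X := ENNReal.ofReal (t ^ (-θ) * a t) with hX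
  set W := LqNorm r (Ioi t) (svWgt r (fun s => b s / a s)) with hW
  set NL := normL A₀.N A₁.N θ r q b a h with hNL
  have hat := ha.2.1 t ht
  by_cases hg : A₀.N g = ∞
  · have : Ck * (1 + C4) + M' ≠ 0 := by
      have : 1 ≤ Ck * (1 + C4) + M' := le_add_right (one_le_mul hCk1 le_self_add)
      exact (zero_lt_one.trans_le this).ne'
    rw [hg, top_add, ENNReal.mul_top this]
    exact le_top
  have hfk : ∀ u, Kf A₀.N A₁.N u f ≤ Ck * (Kf A₀.N A₁.N u h + A₀.N g) := by
    intro u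
    have e : f = h + g := by rw [hh]; abel
    conv_lhs => rw [e]
    refine (hK u h g).trans ?_
    gcongr
    exact Kf_le_left _ _ _ _
  have htop : ENNReal.ofReal t * (ENNReal.ofReal t)⁻¹ = 1 :=
    ENNReal.mul_inv_cancel (by simpa using ht) ENNReal.ofReal_ne_top
  -- `K(t,h) ≲ ρ ‖h‖`
  have hkt : Kf A₀.N A₁.N t h ≤ C4 * (ρ * NL) := by
    have h1 : Kf A₀.N A₁.N t h * X ≤ C4 * LqNorm q (Ioo 0 t) (fun u =>
        ENNReal.ofReal (u ^ (-θ - q⁻¹.toReal) * a u) * Kf A₀.N A₁.N u h) := by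
      have e1 : X = ENNReal.ofReal t⁻¹ * ENNReal.ofReal (t ^ (1 - θ) * a t) := by
        rw [hX, ← ENNReal.ofReal_mul (by positivity)]
        congr 1
        rw [sub_eq_add_neg, Real.rpow_add ht, Real.rpow_one]
        field_simp
      calc Kf A₀.N A₁.N t h * X
          ≤ Kf A₀.N A₁.N t h * (ENNReal.ofReal t⁻¹ * (C4 * LqNorm q (Ioo 0 t)
            (fun u => ENNReal.ofReal (u ^ (1 - θ - q⁻¹.toReal) * a u)))) := by
            rw [e1]; gcongr; exact hlow t ht
        _ = C4 * ((Kf A₀.N A₁.N t h * ENNReal.ofReal t⁻¹) * LqNorm q (Ioo 0 t)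
            (fun u => ENNReal.ofReal (u ^ (1 - θ - q⁻¹.toReal) * a u))) := by ring
        _ ≤ C4 * LqNorm q (Ioo 0 t) (fun u => (Kf A₀.N A₁.N t h * ENNReal.ofReal t⁻¹) *
              ENNReal.ofReal (u ^ (1 - θ - q⁻¹.toReal) * a u)) := by
            gcongr
            exact LqNorm_const_mul_ge hq _ _ _
        _ ≤ _ := by
            gcongr
            refine LqNorm_mono measurableSet_Ioo fun u hu => ?_
            have hu0 := hu.1
            have hau := ha.2.1 u hu0
            refine le_trans (le_of_eq ?_) (mul_le_mul_right (Kf_ratio A₀.N A₁.N h hu0 hu.2.le) _)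
            rw [mul_assoc, mul_comm (Kf A₀.N A₁.N t h), ← mul_assoc,
              ← ENNReal.ofReal_mul (by positivity), ← ENNReal.ofReal_mul (by positivity)]
            congr 2
            rw [show 1 - θ - q⁻¹.toReal = 1 + (-θ - q⁻¹.toReal) by ring, Real.rpow_add hu0,
              Real.rpow_one]
            field_simp
    have h2 : W * LqNorm q (Ioo 0 t) (fun u =>
        ENNReal.ofReal (u ^ (-θ - q⁻¹.toReal) * a u) * Kf A₀.N A₁.N u h) ≤ NL := by
      rw [mul_comm]
      refine (LqNorm_const_mul_ge hr _ _ _).trans ?_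
      refine le_trans ?_ (LqNorm_mono_set (Ioi_subset_Ioi ht.le) _)
      refine LqNorm_mono measurableSet_Ioi fun s hs => ?_
      rw [mul_comm]
      refine mul_le_mul_right ?_ _
      exact LqNorm_mono_set (Ioo_subset_Ioo_right (le_of_lt hs)) _
    calc Kf A₀.N A₁.N t h = ρ * W * (Kf A₀.N A₁.N t h * X) := by
          rw [show ρ * W * (Kf A₀.N A₁.N t h * X) = (ρ * (X * W)) * Kf A₀.N A₁.N t h by ring,
            hid, one_mul]
      _ ≤ ρ * W * (C4 * LqNorm q (Ioo 0 t) (fun u =>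
        ENNReal.ofReal (u ^ (-θ - q⁻¹.toReal) * a u) * Kf A₀.N A₁.N u h)) := by gcongr
      _ = C4 * (ρ * (W * LqNorm q (Ioo 0 t) (fun u =>
        ENNReal.ofReal (u ^ (-θ - q⁻¹.toReal) * a u) * Kf A₀.N A₁.N u h))) := by ring
      _ ≤ _ := by gcongr
  have hR := hout
    (fun s => LqNorm q (Ioo t s) (fun u =>
      ENNReal.ofReal (u ^ (-θ - q⁻¹.toReal) * a u) * Kf A₀.N A₁.N u f))
    (fun s => LqNorm q (Ioo t s) (fun u =>
      ENNReal.ofReal (u ^ (-θ - q⁻¹.toReal) * a u) * Kf A₀.N A₁.N u h))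
    (A₀.N g * X) t ht (by finiteness)
    (fun s _ => hin _ _ _ (Kf_mono _ _ h) hg hfk t s ht)
  have hR2 : LqNorm r (Ioi t) (fun s =>
      ENNReal.ofReal (s ^ (-(r⁻¹.toReal)) * (b s / a s)) *
        LqNorm q (Ioo t s) (fun u =>
          ENNReal.ofReal (u ^ (-θ - q⁻¹.toReal) * a u) * Kf A₀.N A₁.N u h)) ≤ NL := by
    refine le_trans ?_ (LqNorm_mono_set (Ioi_subset_Ioi ht.le) _)
    refine LqNorm_mono measurableSet_Ioi fun s hs => ?_
    refine mul_le_mul_right ?_ _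
    exact LqNorm_mono_set (Ioo_subset_Ioo_left ht.le) _
  calc _ ≤ Ck * (C4 * (ρ * NL) + A₀.N g) + ρ * (M' * (NL + A₀.N g * X * W)) := by
        refine add_le_add ((hfk t).trans (by gcongr)) (mul_le_mul_right (hR.trans ?_) _)
        gcongr
    _ = Ck * (C4 * (ρ * NL) + A₀.N g) + M' * (ρ * NL + A₀.N g * (ρ * (X * W))) := by ring
    _ = Ck * (C4 * (ρ * NL) + A₀.N g) + M' * (A₀.N g + ρ * NL) := by
        rw [hid, mul_one, add_comm (ρ * NL)]
    _ ≤ Ck * ((1 + C4) * (A₀.N g + ρ * NL)) + M' * (A₀.N g + ρ * NL) := by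
        gcongr
        rw [add_mul, one_mul, add_comm]
        gcongr
        · exact le_self_add
        · exact le_add_self
    _ = _ := by ring

theorem holm_upper
    (A₀ A₁ : QuasiBanach E) (θ : ℝ) (hθ : 0 < θ) (hθ' : θ < 1)
    (q r : ℝ≥0∞) (hq : 0 < q) (hr : 0 < r) (a b : ℝ → ℝ)
    (ha : SlowlyVarying a) (hb : SlowlyVarying b) :
    ∃ C : ℝ≥0∞, C ≠ ∞ ∧ ∀ (f : E) (t : ℝ) (ρ : ℝ≥0∞), 0 < t →
      ρ * (ENNReal.ofReal (t ^ (-θ) * a t) *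
        LqNorm r (Ioi t) (svWgt r (fun s => b s / a s))) = 1 →
      (⨅ g : E, A₀.N g + ρ * normL A₀.N A₁.N θ r q b a (f - g)) ≤
      C * (Kf A₀.N A₁.N t f + ρ *
            LqNorm r (Ioi t) (fun s =>
              ENNReal.ofReal (s ^ (-(r⁻¹.toReal)) * (b s / a s)) *
                LqNorm q (Ioo t s) (fun u =>
                  ENNReal.ofReal (u ^ (-θ - q⁻¹.toReal) * a u) * Kf A₀.N A₁.N u f))) := by
  obtain ⟨Ck, hCk, hCk1, hK⟩ := Kf_quasi A₀ A₁
  obtain ⟨M, hM, hin⟩ := inner_shift hq hθ ha hCk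
  obtain ⟨Dq, hDq, hDq1, huq⟩ := LqNorm_union hq
  obtain ⟨Dr, hDr, hDr1, hur⟩ := LqNorm_union hr
  obtain ⟨C1, hC1, hE1⟩ := sv_Ioc hq (sub_pos.2 hθ') ha
  obtain ⟨C2, hC2, hE2⟩ := sv_Ioc hr (sub_pos.2 hθ') hb
  obtain ⟨C5, hC5, hE5⟩ := sv_W_lower hr ha hb
  obtain ⟨M', hM', hout⟩ := outer_bound hr ha hb (M := Dq * (C1 + M)) (by finiteness)
  refine ⟨1 + Dr * (C1 * C2 * C5 + M'), by finiteness, fun f t ρ ht hid => ?_⟩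
  set R := LqNorm r (Ioi t) (fun s =>
              ENNReal.ofReal (s ^ (-(r⁻¹.toReal)) * (b s / a s)) *
                LqNorm q (Ioo t s) (fun u =>
                  ENNReal.ofReal (u ^ (-θ - q⁻¹.toReal) * a u) * Kf A₀.N A₁.N u f)) with hRdef
  conv_rhs => unfold Kf
  rw [ENNReal.iInf_add, ENNReal.mul_iInf_of_ne (by simp) (by finiteness)]
  refine le_iInf fun g => (iInf_le _ g).trans ?_
  set h := f - g with hh
  set X := ENNReal.ofReal (t ^ (-θ) * a t) with hX
  set W := LqNorm r (Ioi t) (svWgt r (fun s => b s / a s)) with hW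
  set κ := A₀.N g + ENNReal.ofReal t * A₁.N h with hκdef
  have hat := ha.2.1 t ht
  have hbt := hb.2.1 t ht
  by_cases hκ : κ = ∞
  · rw [hκ, top_add, ENNReal.mul_top (by simp)]
    exact le_top
  have hg : A₀.N g ≠ ∞ := ne_top_of_le_ne_top hκ le_self_add
  have hN1 : A₁.N h ≠ ∞ := by
    intro h1
    apply hκ
    rw [hκdef, h1, ENNReal.mul_top (by simpa using ht), add_top]
  have hfk : ∀ u, Kf A₀.N A₁.N u h ≤ Ck * (Kf A₀.N A₁.N u f + A₀.N g) := by
    intro u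
    have e : h = f + -g := by rw [hh]; abel
    conv_lhs => rw [e]
    refine (hK u f (-g)).trans ?_
    gcongr
    exact (Kf_le_left _ _ _ _).trans (QB_neg A₀ g).le
  -- inner estimate near zero
  have hinner : ∀ s, 0 < s → LqNorm q (Ioc 0 s) (fun u =>
      ENNReal.ofReal (u ^ (-θ - q⁻¹.toReal) * a u) * Kf A₀.N A₁.N u h) ≤
      A₁.N h * (C1 * ENNReal.ofReal (s ^ (1 - θ) * a s)) := by
    intro s hs
    calc _ ≤ LqNorm q (Ioc 0 s) (fun u => A₁.N h *
          ENNReal.ofReal (u ^ (1 - θ - q⁻¹.toReal) * a u)) := by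
          refine LqNorm_mono measurableSet_Ioc fun u hu => ?_
          have hu0 := hu.1
          have hau := ha.2.1 u hu0
          refine (mul_le_mul_right (Kf_le_right A₀ A₁ u h) _).trans (le_of_eq ?_)
          rw [← mul_assoc, mul_comm (A₁.N h), ← ENNReal.ofReal_mul (by positivity)]
          congr 2
          rw [show 1 - θ - q⁻¹.toReal = (-θ - q⁻¹.toReal) + 1 by ring, Real.rpow_add hu0,
              Real.rpow_one]
          ring
      _ = A₁.N h * LqNorm q (Ioc 0 s) (fun u =>
          ENNReal.ofReal (u ^ (1 - θ - q⁻¹.toReal) * a u)) := LqNorm_const_mul hq _ hN1 _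
      _ ≤ _ := by gcongr; exact hE1 s hs
  have htX : ENNReal.ofReal (t ^ (1 - θ) * a t) = ENNReal.ofReal t * X := by
    rw [hX, ← ENNReal.ofReal_mul ht.le, sub_eq_add_neg, Real.rpow_add ht, Real.rpow_one]
    congr 1
    ring
  have htX2 : ENNReal.ofReal (t ^ (1 - θ) * b t) =
      ENNReal.ofReal t * X * ENNReal.ofReal (b t / a t) := by
    rw [← htX, ← ENNReal.ofReal_mul (by positivity)]
    congr 1
    field_simp
  -- part 1
  have hP1 : LqNorm r (Ioc 0 t) (fun s =>
      ENNReal.ofReal (s ^ (-(r⁻¹.toReal)) * (b s / a s)) *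
        LqNorm q (Ioo 0 s) (fun u =>
          ENNReal.ofReal (u ^ (-θ - q⁻¹.toReal) * a u) * Kf A₀.N A₁.N u h)) ≤
      C1 * C2 * C5 * (ENNReal.ofReal t * A₁.N h) * (X * W) := by
    calc _ ≤ LqNorm r (Ioc 0 t) (fun s => (A₁.N h * C1) *
          ENNReal.ofReal (s ^ (1 - θ - r⁻¹.toReal) * b s)) := by
          refine LqNorm_mono measurableSet_Ioc fun s hs => ?_
          have hs0 := hs.1
          have has := ha.2.1 s hs0
          have hbs := hb.2.1 s hs0
          refine (mul_le_mul_right ((LqNorm_mono_set Ioo_subset_Ioc_self _).trans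
            (hinner s hs0)) _).trans (le_of_eq ?_)
          rw [← mul_assoc (A₁.N h), mul_left_comm, ← ENNReal.ofReal_mul (by positivity)]
          congr 2
          rw [show 1 - θ - r⁻¹.toReal = -r⁻¹.toReal + (1 - θ) by ring, Real.rpow_add hs0]
          field_simp
      _ = (A₁.N h * C1) * LqNorm r (Ioc 0 t) (fun s =>
          ENNReal.ofReal (s ^ (1 - θ - r⁻¹.toReal) * b s)) :=
          LqNorm_const_mul hr _ (by finiteness) _
      _ ≤ (A₁.N h * C1) * (C2 * (ENNReal.ofReal t * X * (C5 * W))) := by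
          gcongr
          refine (hE2 t ht).trans ?_
          rw [htX2]
          gcongr
          exact hE5 t ht
      _ = _ := by ring
  -- part 2
  have hP2 := hout
    (fun s => LqNorm q (Ioo 0 s) (fun u =>
      ENNReal.ofReal (u ^ (-θ - q⁻¹.toReal) * a u) * Kf A₀.N A₁.N u h))
    (fun s => LqNorm q (Ioo t s) (fun u =>
      ENNReal.ofReal (u ^ (-θ - q⁻¹.toReal) * a u) * Kf A₀.N A₁.N u f))
    (κ * X) t ht (by finiteness)
    (fun s hs => by
      refine (LqNorm_mono_set (t := Ioc 0 t ∪ Ioo t s) ?_ _).trans ((huq _ _ _).trans ?_)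
      · intro x hx
        rcases le_or_gt x t with h1 | h1
        · exact Or.inl ⟨hx.1, h1⟩
        · exact Or.inr ⟨h1, hx.2⟩
      · rw [mul_assoc Dq]
        gcongr
        rw [add_mul C1 M]
        refine add_le_add ?_ ?_
        · refine (hinner t ht).trans ?_
          rw [htX]
          calc A₁.N h * (C1 * (ENNReal.ofReal t * X)) =
              C1 * (ENNReal.ofReal t * A₁.N h * X) := by ring
            _ ≤ C1 * (κ * X) := by gcongr; exact le_add_self
            _ ≤ _ := by gcongr; exact le_add_self
        · refine (hin _ _ _ (Kf_mono _ _ f) hg hfk t s ht).trans ?_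
          gcongr
          exact le_self_add)
  have hNL : normL A₀.N A₁.N θ r q b a h ≤
      Dr * (C1 * C2 * C5 * (ENNReal.ofReal t * A₁.N h) * (X * W) + M' * (R + κ * X * W)) := by
    unfold normL
    rw [← Ioc_union_Ioi_eq_Ioi ht.le]
    refine (hur _ _ _).trans ?_
    gcongr
  calc A₀.N g + ρ * normL A₀.N A₁.N θ r q b a h
      ≤ κ + ρ * (Dr * (C1 * C2 * C5 * κ * (X * W) + M' * (R + κ * X * W))) := by
        gcongr
        · exact le_self_add
        · refine hNL.trans ?_
          gcongr
          exact le_add_self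
    _ = κ + Dr * (C1 * C2 * C5 * κ * (ρ * (X * W)) + M' * (ρ * R + κ * (ρ * (X * W)))) := by ring
    _ = κ + Dr * (C1 * C2 * C5 * κ + M' * (κ + ρ * R)) := by
        rw [hid, mul_one, mul_one, add_comm (ρ * R)]
    _ ≤ (κ + ρ * R) + Dr * (C1 * C2 * C5 * (κ + ρ * R) + M' * (κ + ρ * R)) := by
        gcongr <;> exact le_self_add
    _ = _ := by ring

theorem theorem14
    (A₀ A₁ : QuasiBanach E)
    (hne : ∃ x : E, x ≠ 0 ∧ A₀.N x ≠ ∞ ∧ A₁.N x ≠ ∞)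
    (θ₁ : ℝ) (hθ₁ : 0 < θ₁) (hθ₁' : θ₁ < 1)
    (q₁ r₁ : ℝ≥0∞) (hq₁ : 0 < q₁) (hr₁ : 0 < r₁)
    (a₁ b₁ : ℝ → ℝ)
    (h_sv_a₁ : SlowlyVarying a₁)
    (h_sv_b₁ : SlowlyVarying b₁)
    (hfin : LqNorm r₁ (Ioi 1) (svWgt r₁ (fun s => b₁ s / a₁ s)) ≠ ∞)
    (c₁ ρ : ℝ → ℝ)
    (hc₁ : ∀ t, c₁ t = a₁ t * (LqNorm r₁ (Ioi t) (svWgt r₁ (fun s => b₁ s / a₁ s))).toReal)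
    (hρ : ∀ t, ρ t = t ^ θ₁ / c₁ t) :
    ∃ C : ℝ≥0∞, 0 < C ∧ C ≠ ∞ ∧
      ∀ f : E,
        (∃ f₀ f₁, f = f₀ + f₁ ∧ A₀.N f₀ ≠ ∞ ∧ normL A₀.N A₁.N θ₁ r₁ q₁ b₁ a₁ f₁ ≠ ∞) →
        ∀ t : ℝ, 0 < t →
          C⁻¹ * (Kf A₀.N A₁.N t f + ENNReal.ofReal (ρ t) *
            LqNorm r₁ (Ioi t) (fun s =>
              ENNReal.ofReal (s ^ (-(r₁⁻¹.toReal)) * (b₁ s / a₁ s)) *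
                LqNorm q₁ (Ioo t s) (fun u =>
                  ENNReal.ofReal (u ^ (-θ₁ - q₁⁻¹.toReal) * a₁ u) * Kf A₀.N A₁.N u f)))
              ≤ Kf A₀.N (normL A₀.N A₁.N θ₁ r₁ q₁ b₁ a₁) (ρ t) f ∧
          Kf A₀.N (normL A₀.N A₁.N θ₁ r₁ q₁ b₁ a₁) (ρ t) f
              ≤ C * (Kf A₀.N A₁.N t f + ENNReal.ofReal (ρ t) *
            LqNorm r₁ (Ioi t) (fun s =>
              ENNReal.ofReal (s ^ (-(r₁⁻¹.toReal)) * (b₁ s / a₁ s)) *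
                LqNorm q₁ (Ioo t s) (fun u =>
                  ENNReal.ofReal (u ^ (-θ₁ - q₁⁻¹.toReal) * a₁ u) * Kf A₀.N A₁.N u f))) := by
  obtain ⟨C, hC, hlo⟩ := holm_lower A₀ A₁ θ₁ hθ₁ hθ₁' q₁ r₁ hq₁ hr₁ a₁ b₁ h_sv_a₁ h_sv_b₁
  obtain ⟨C', hC', hup⟩ := holm_upper A₀ A₁ θ₁ hθ₁ hθ₁' q₁ r₁ hq₁ hr₁ a₁ b₁ h_sv_a₁ h_sv_b₁
  obtain ⟨C5, hC5, hE5⟩ := sv_W_lower hr₁ h_sv_a₁ h_sv_b₁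
  refine ⟨1 + C + C', by simp, by finiteness, fun f _ t ht => ?_⟩
  have hat := h_sv_a₁.2.1 t ht
  have hbt := h_sv_b₁.2.1 t ht
  have hWfin := sv_W_finite hr₁ h_sv_a₁ h_sv_b₁ hfin t ht
  have hW0 : LqNorm r₁ (Ioi t) (svWgt r₁ (fun s => b₁ s / a₁ s)) ≠ 0 := by
    intro h0
    have h1 := hE5 t ht
    rw [h0, mul_zero, nonpos_iff_eq_zero, ENNReal.ofReal_eq_zero] at h1
    have : 0 < b₁ t / a₁ t := by positivity
    linarith
  have hid := holm_identity (θ := θ₁) ht hat hW0 hWfin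
  rw [← hc₁, ← hρ] at hid
  constructor
  · rw [ENNReal.inv_mul_le_iff (by simp) (by finiteness)]
    refine (hlo f t _ ht hid).trans ?_
    refine mul_le_mul_left ?_ _
    exact le_add_right le_add_self
  · refine (hup f t _ ht hid).trans ?_
    refine mul_le_mul_left ?_ _
    exact le_add_self

end
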